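/- Let E ⊂ ℝⁿ be a bounded open set of width d in the xₙ-direction (i.e., E ⊂ {0 < xₙ < d}). Suppose W ∈ L_{2s} ∩ C^{1,1}_{loc}(E) attains a negative global minimum over ℝⁿ at x⁰ ∈ E, and W ≥ 0 on Eᶜ. Then there is a constant c = c(n, s) > 0 such that (−Δ)^s W(x⁰) ≤ c·W(x⁰)/d^{2s}. -/

import Mathlib

open MeasureTheory

/-- The fractional Laplacian (−Δ)^s with normalizing constant C. -/
noncomputable def fracLap (n : ℕ) (s C : ℝ)
    (W : EuclideanSpace ℝ (Fin n) → ℝ) (x : EuclideanSpace ℝ (Fin n)) : ℝ :=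
  C * ∫ y, (W x - W y) / ‖x - y‖ ^ ((n : ℝ) + 2 * s)

/-!
At a negative global minimum `x` the integrand of `fracLap` is nonpositive, so restricting the
integral to a ball of radius `d` on which `W ≥ 0` can only increase it. The half-space at distance
`d` from `x` contains such a ball centred at distance `2 * d` from `x`. There the integrand is at
most `W x / (3 * d) ^ (n + 2 * s)`, while the volume of the ball is proportional to `d ^ n`.
-/

open Metric RealInnerProductSpace

theorem mul_measureReal_div_rpow_le_integral {V : Type*} [SeminormedAddCommGroup V]
    [MeasurableSpace V] {μ : Measure V} {g : V → ℝ} {x : V} {A : Set V} {m p R : ℝ}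
    (hp : 0 ≤ p) (hA : MeasurableSet A) (hμA : μ A ≠ ⊤)
    (hAR : A ⊆ closedBall x R) (hAx : ∀ y ∈ A, 0 < ‖x - y‖)
    (hg : ∀ y, 0 ≤ g y) (hgA : ∀ y ∈ A, m ≤ g y)
    (hint : Integrable (fun y => g y / ‖x - y‖ ^ p) μ) :
    m * (μ.real A / R ^ p) ≤ ∫ y, g y / ‖x - y‖ ^ p ∂μ := by
  have integrand_nonneg (y : V) : 0 ≤ g y / ‖x - y‖ ^ p :=
    div_nonneg (hg y) (by positivity)
  have le_integrand : ∀ y ∈ A, m / R ^ p ≤ g y / ‖x - y‖ ^ p := fun y hy => by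
    have hxy : ‖x - y‖ ≤ R := mem_closedBall_iff_norm'.mp (hAR hy)
    exact div_le_div₀ (hg y) (hgA y hy) (Real.rpow_pos_of_pos (hAx y hy) p)
      (Real.rpow_le_rpow (norm_nonneg _) hxy hp)
  calc m * (μ.real A / R ^ p)
    _ = m / R ^ p * μ.real A := by ring
    _ ≤ ∫ y in A, g y / ‖x - y‖ ^ p ∂μ :=
      setIntegral_ge_of_const_le_real hA hμA le_integrand hint.integrableOn
    _ ≤ ∫ y, g y / ‖x - y‖ ^ p ∂μ :=
      setIntegral_le_integral hint (ae_of_all μ integrand_nonneg)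

theorem inner_add_sub_le_inner_of_mem_closedBall {V : Type*} [SeminormedAddCommGroup V]
    [InnerProductSpace ℝ V] {e x y : V} {t r : ℝ} (he : ‖e‖ = 1)
    (hy : y ∈ closedBall (x + t • e) r) :
    ⟪e, x⟫ + t - r ≤ ⟪e, y⟫ := by
  have hinner : ⟪e, x + t • e - y⟫ ≤ r :=
    calc ⟪e, x + t • e - y⟫
      _ ≤ ‖e‖ * ‖x + t • e - y‖ := real_inner_le_norm _ _
      _ = ‖x + t • e - y‖ := by rw [he, one_mul]
      _ ≤ r := mem_closedBall_iff_norm'.mp hy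
  rw [inner_sub_right, inner_add_right, inner_smul_right, real_inner_self_eq_norm_sq, he] at hinner
  linarith

theorem measureReal_closedBall_div_rpow {V : Type*} [NormedAddCommGroup V] [NormedSpace ℝ V]
    [FiniteDimensional ℝ V] [MeasurableSpace V] [BorelSpace V] (μ : Measure V) [μ.IsAddHaarMeasure]
    (z : V) {k d : ℝ} (q : ℝ) (hk : 0 ≤ k) (hd : 0 < d) :
    μ.real (closedBall z d) / (k * d) ^ (Module.finrank ℝ V + q) =
      μ.real (ball 0 1) / k ^ (Module.finrank ℝ V + q) / d ^ q := by
  rw [Measure.addHaar_real_closedBall μ z hd.le, Real.mul_rpow hk hd.le, Real.rpow_add hd,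
    Real.rpow_natCast]
  field_simp

theorem fracLap_le_of_nonneg_on {n : ℕ} {s C R : ℝ} {W : EuclideanSpace ℝ (Fin n) → ℝ}
    {x : EuclideanSpace ℝ (Fin n)} {A : Set (EuclideanSpace ℝ (Fin n))}
    (hs : 0 ≤ n + 2 * s) (hC : 0 ≤ C)
    (hint : Integrable (fun y => (W x - W y) / ‖x - y‖ ^ ((n : ℝ) + 2 * s)))
    (hneg : W x < 0) (hmin : ∀ y, W x ≤ W y) (hA : MeasurableSet A) (hvol : volume A ≠ ⊤)
    (hAR : A ⊆ closedBall x R) (hnonneg : ∀ y ∈ A, 0 ≤ W y) :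
    fracLap n s C W x ≤ C * (W x * (volume.real A / R ^ ((n : ℝ) + 2 * s))) := by
  have integrand_eq_neg (y : EuclideanSpace ℝ (Fin n)) :
      (W x - W y) / ‖x - y‖ ^ ((n : ℝ) + 2 * s) =
        -((W y - W x) / ‖x - y‖ ^ ((n : ℝ) + 2 * s)) := by
    rw [← neg_div, neg_sub]
  have norm_sub_pos : ∀ y ∈ A, 0 < ‖x - y‖ := fun y hy => by
    refine norm_sub_pos_iff.mpr ?_
    rintro rfl
    exact hneg.not_ge (hnonneg x hy)
  simp only [integrand_eq_neg] at hint
  have lower_bound : -W x * (volume.real A / R ^ ((n : ℝ) + 2 * s)) ≤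
      ∫ y, (W y - W x) / ‖x - y‖ ^ ((n : ℝ) + 2 * s) :=
    mul_measureReal_div_rpow_le_integral hs hA hvol hAR norm_sub_pos
      (fun y => sub_nonneg.mpr (hmin y)) (fun y hy => by linarith [hnonneg y hy])
      (integrable_neg_iff.mp hint)
  simp only [fracLap, integrand_eq_neg, integral_neg]
  gcongr
  rwa [neg_le, ← neg_mul]

theorem fracLap_narrow_region_estimate_general (n : ℕ) {s C : ℝ} (hs : 0 < s) (hC : 0 < C) :
    ∃ c > (0 : ℝ), ∀ (d : ℝ) (W : EuclideanSpace ℝ (Fin n) → ℝ) (e x : EuclideanSpace ℝ (Fin n)),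
      0 < d → ‖e‖ = 1 →
      Integrable (fun y => (W x - W y) / ‖x - y‖ ^ ((n : ℝ) + 2 * s)) →
      W x < 0 → (∀ y, W x ≤ W y) → (∀ y, ⟪e, x⟫ + d ≤ ⟪e, y⟫ → 0 ≤ W y) →
      fracLap n s C W x ≤ c * W x / d ^ (2 * s) := by
  have volume_pos : 0 < volume.real (ball (0 : EuclideanSpace ℝ (Fin n)) 1) :=
    ENNReal.toReal_pos (measure_ball_pos _ _ one_pos).ne' measure_ball_lt_top.ne
  refine ⟨C * (volume.real (ball (0 : EuclideanSpace ℝ (Fin n)) 1) / 3 ^ ((n : ℝ) + 2 * s)),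
    by positivity, fun d W e x hd he hint hneg hmin hnonneg => ?_⟩
  have closedBall_subset : closedBall (x + (2 * d) • e) d ⊆ closedBall x (3 * d) := by
    refine closedBall_subset_closedBall' ?_
    rw [dist_self_add_left, norm_smul, he, Real.norm_of_nonneg (by positivity)]
    linarith
  have nonneg_on_closedBall : ∀ y ∈ closedBall (x + (2 * d) • e) d, 0 ≤ W y := fun y hy =>
    hnonneg y (by linarith [inner_add_sub_le_inner_of_mem_closedBall he hy])
  have volume_ratio :=
    measureReal_closedBall_div_rpow volume (x + (2 * d) • e) (2 * s) zero_le_three hd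
  rw [finrank_euclideanSpace_fin] at volume_ratio
  calc fracLap n s C W x
    _ ≤ C * (W x * (volume.real (closedBall (x + (2 * d) • e) d) /
          (3 * d) ^ ((n : ℝ) + 2 * s))) :=
      fracLap_le_of_nonneg_on (by positivity) hC.le hint hneg hmin measurableSet_closedBall
        measure_closedBall_lt_top.ne closedBall_subset nonneg_on_closedBall
    _ = C * (volume.real (ball (0 : EuclideanSpace ℝ (Fin n)) 1) / 3 ^ ((n : ℝ) + 2 * s)) * W x /
          d ^ (2 * s) := by
      rw [volume_ratio]
      ring

/-- Singular-kernel estimate at a negative global minimum in a narrow region: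
(−Δ)^s W(x⁰) ≤ c·W(x⁰)/d^{2s}, with c = c(n, s) > 0. -/
theorem fracLap_narrow_region_estimate (n : ℕ) (hn : 1 ≤ n) (s Cns : ℝ)
    (hs : s ∈ Set.Ioo (0:ℝ) 1) (hCns : 0 < Cns) :
    ∃ c > (0:ℝ), ∀ (d : ℝ) (E : Set (EuclideanSpace ℝ (Fin n)))
      (W : EuclideanSpace ℝ (Fin n) → ℝ) (x0 : EuclideanSpace ℝ (Fin n)),
      0 < d → IsOpen E → Bornology.IsBounded E →
      (∀ x ∈ E, 0 < x ⟨n-1, by omega⟩ ∧ x ⟨n-1, by omega⟩ < d) →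
      Integrable (fun x => |W x| / (1 + ‖x‖ ^ ((n : ℝ) + 2 * s))) →
      Integrable (fun y => (W x0 - W y) / ‖x0 - y‖ ^ ((n : ℝ) + 2 * s)) →
      x0 ∈ E → W x0 < 0 → (∀ y, W x0 ≤ W y) → (∀ y ∉ E, 0 ≤ W y) →
      fracLap n s Cns W x0 ≤ c * W x0 / d ^ (2 * s) := by
  obtain ⟨c, hc, hle⟩ := fracLap_narrow_region_estimate_general n hs.1 hCns
  refine ⟨c, hc, fun d E W x0 hd _ _ hE _ hint hx0 hneg hmin hnonneg =>
    hle d W (.single ⟨n - 1, by omega⟩ 1) x0 hd (by simp) hint hneg hmin fun y hy =>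
      hnonneg y fun hyE => ?_⟩
  simp only [EuclideanSpace.inner_single_left, map_one, one_mul] at hy
  linarith [(hE x0 hx0).1, (hE y hyE).2]
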